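/- arXiv:1802.08353 — 2 statements merged into one kernel-verified Lean document; each statement's English description precedes it below -/
import Mathlib

section
/- D is a *-SH domain with trivial *-class group if and only if D is a *-wf-SH domain, i.e., every nonzero nonunit of D is expressible as a finite product of *-wf-homogeneous elements. -/
open scoped nonZeroDivisors

/-- A star operation on the nonzero fractional ideals of an integral domain `D`
with quotient field `K`: it fixes nonzero principal fractional ideals, commutes with
multiplication by nonzero principal fractional ideals, is extensive, monotone and
idempotent (on nonzero fractional ideals). -/
structure StarOperation (D K : Type*) [CommRing D] [IsDomain D] [Field K]
    [Algebra D K] [IsFractionRing D K] where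
  star : FractionalIdeal D⁰ K → FractionalIdeal D⁰ K
  star_spanSingleton : ∀ x : K, x ≠ 0 →
    star (FractionalIdeal.spanSingleton D⁰ x) = FractionalIdeal.spanSingleton D⁰ x
  star_smul : ∀ (x : K) (I : FractionalIdeal D⁰ K), x ≠ 0 → I ≠ 0 →
    star (FractionalIdeal.spanSingleton D⁰ x * I) = FractionalIdeal.spanSingleton D⁰ x * star I
  le_star : ∀ I : FractionalIdeal D⁰ K, I ≠ 0 → I ≤ star I
  star_mono : ∀ I J : FractionalIdeal D⁰ K, I ≠ 0 → J ≠ 0 → I ≤ J → star I ≤ star J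
  star_idem : ∀ I : FractionalIdeal D⁰ K, I ≠ 0 → star (star I) = star I

namespace StarOperation

variable {D K : Type*} [CommRing D] [IsDomain D] [Field K] [Algebra D K] [IsFractionRing D K]
variable (s : StarOperation D K)

/-- `*` has finite character: for every nonzero fractional ideal `I`, `I^*` is the union
of `J^*` over the nonzero finitely generated fractional subideals `J` of `I`. -/
def FiniteCharacter : Prop :=
  ∀ I : FractionalIdeal D⁰ K, I ≠ 0 → ∀ x ∈ s.star I,
    ∃ J : FractionalIdeal D⁰ K, J ≠ 0 ∧ (J : Submodule D K).FG ∧ J ≤ I ∧ x ∈ s.star J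

/-- A (nonzero) integral ideal `I` of `D` is a `*`-ideal if `I^* = I`. -/
def IsStarIdeal (I : Ideal D) : Prop :=
  I ≠ ⊥ ∧ s.star (I : FractionalIdeal D⁰ K) = (I : FractionalIdeal D⁰ K)

/-- An integral ideal `I` of `D` is a `*`-ideal of finite type if `I = J^*` for some
nonzero finitely generated ideal `J`. -/
def IsFiniteTypeStarIdeal (I : Ideal D) : Prop :=
  ∃ J : Ideal D, J ≠ ⊥ ∧ J.FG ∧
    s.star (J : FractionalIdeal D⁰ K) = (I : FractionalIdeal D⁰ K)

/-- A maximal `*`-ideal: maximal among proper integral `*`-ideals. -/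
def IsMaxStarIdeal (M : Ideal D) : Prop :=
  M ≠ ⊤ ∧ s.IsStarIdeal M ∧ ∀ J : Ideal D, J ≠ ⊤ → s.IsStarIdeal J → M ≤ J → J = M

/-- `I` is `*`-homogeneous: a proper `*`-ideal of finite type such that `(J + J')^* ≠ D`
for every pair `J`, `J'` of proper `*`-ideals of finite type containing `I`. -/
def IsHomog (I : Ideal D) : Prop :=
  I ≠ ⊤ ∧ s.IsStarIdeal I ∧ s.IsFiniteTypeStarIdeal I ∧
    ∀ J J' : Ideal D, J ≠ ⊤ → J' ≠ ⊤ → s.IsStarIdeal J → s.IsStarIdeal J' →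
      s.IsFiniteTypeStarIdeal J → s.IsFiniteTypeStarIdeal J' → I ≤ J → I ≤ J' →
      s.star ((J + J' : Ideal D) : FractionalIdeal D⁰ K) ≠ 1

/-- The set `M(I) = {x ∈ D : (xD + I)^* ≠ D}` attached to an ideal `I`. -/
def MSet (I : Ideal D) : Set D :=
  {x : D | s.star ((Ideal.span {x} + I : Ideal D) : FractionalIdeal D⁰ K) ≠ 1}

/-- `A` and `B` are `*`-comaximal if `(A + B)^* = D`. -/
def StarComaximal (A B : Ideal D) : Prop :=
  s.star ((A + B : Ideal D) : FractionalIdeal D⁰ K) = 1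

/-- An integral ideal `I` is `*`-invertible if `(I · I⁻¹)^* = D`. -/
def StarInvertible (I : Ideal D) : Prop :=
  s.star ((I : FractionalIdeal D⁰ K) * (I : FractionalIdeal D⁰ K)⁻¹) = 1

/-- `D` is a `*`-SH domain: every principal ideal generated by a nonzero nonunit is a
`*`-product of finitely many `*`-homogeneous ideals. -/
def IsSHDomain : Prop :=
  ∀ x : D, x ≠ 0 → ¬IsUnit x →
    ∃ T : Multiset (Ideal D), (∀ J ∈ T, s.IsHomog J) ∧
      s.star ((T.prod : Ideal D) : FractionalIdeal D⁰ K) =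
        ((Ideal.span {x} : Ideal D) : FractionalIdeal D⁰ K)

/-- `D` has finite `*`-character: every nonzero nonunit lies in only finitely many
maximal `*`-ideals. -/
def FiniteStarCharacter : Prop :=
  ∀ x : D, x ≠ 0 → ¬IsUnit x → {P : Ideal D | s.IsMaxStarIdeal P ∧ x ∈ P}.Finite

end StarOperation

namespace StarOperation

variable {D K : Type*} [CommRing D] [IsDomain D] [Field K] [Algebra D K] [IsFractionRing D K]

/-- `D` has trivial `*`-class group: every `*`-invertible integral `*`-ideal is
principal. -/
def TrivialStarClassGroup (s : StarOperation D K) : Prop :=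
  ∀ I : Ideal D, s.IsStarIdeal I → s.StarInvertible I → I.IsPrincipal

/-- A `*`-homogeneous ideal `I` is `*`-wf-homogeneous if, whenever `I` is `*`-invertible,
every `*`-invertible integral `*`-ideal containing `I` is principal. -/
def IsWfHomog (s : StarOperation D K) (I : Ideal D) : Prop :=
  s.IsHomog I ∧ (s.StarInvertible I →
    ∀ J : Ideal D, s.IsStarIdeal J → s.StarInvertible J → I ≤ J → J.IsPrincipal)

/-- An element `x` of `D` is a `*`-wf-homogeneous element if `xD` is a `*`-wf-homogeneous
ideal. -/
def IsWfHomogElem (s : StarOperation D K) (x : D) : Prop :=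
  s.IsWfHomog (Ideal.span {x})

end StarOperation

namespace StarOperation

open FractionalIdeal

variable {D K : Type*} [CommRing D] [IsDomain D] [Field K] [Algebra D K] [IsFractionRing D K]

theorem star_one' (s : StarOperation D K) : s.star 1 = 1 := by
  have := s.star_spanSingleton 1 one_ne_zero
  rwa [spanSingleton_one] at this

theorem star_le_one (s : StarOperation D K) {I : FractionalIdeal D⁰ K} (h0 : I ≠ 0) (h : I ≤ 1) :
    s.star I ≤ 1 := by
  have := s.star_mono I 1 h0 one_ne_zero h
  rwa [s.star_one'] at this

theorem exists_st (s : StarOperation D K) (I : Ideal D) (h : I ≠ ⊥) :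
    ∃ J : Ideal D, (J : FractionalIdeal D⁰ K) = s.star (I : FractionalIdeal D⁰ K) :=
  le_one_iff_exists_coeIdeal.mp (s.star_le_one (coeIdeal_ne_zero.mpr h) coeIdeal_le_one)

open Classical in
/-- The star operation transported to integral ideals. -/
noncomputable def st (s : StarOperation D K) (I : Ideal D) : Ideal D :=
  if h : I = ⊥ then ⊥ else Classical.choose (s.exists_st I h)

theorem st_bot (s : StarOperation D K) : s.st ⊥ = ⊥ := by simp [st]

theorem coe_st (s : StarOperation D K) {I : Ideal D} (h : I ≠ ⊥) :
    (s.st I : FractionalIdeal D⁰ K) = s.star (I : FractionalIdeal D⁰ K) := by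
  rw [st, dif_neg h]
  exact Classical.choose_spec (s.exists_st I h)

theorem le_st (s : StarOperation D K) (I : Ideal D) : I ≤ s.st I := by
  by_cases h : I = ⊥
  · simp [h]
  · rw [← coeIdeal_le_coeIdeal K, s.coe_st h]
    exact s.le_star _ (coeIdeal_ne_zero.mpr h)

theorem st_mono (s : StarOperation D K) {I J : Ideal D} (hIJ : I ≤ J) : s.st I ≤ s.st J := by
  by_cases h : I = ⊥
  · simp [h, st_bot]
  · have hJ : J ≠ ⊥ := fun e => h (le_bot_iff.mp (e ▸ hIJ))
    rw [← coeIdeal_le_coeIdeal K, s.coe_st h, s.coe_st hJ]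
    exact s.star_mono _ _ (coeIdeal_ne_zero.mpr h) (coeIdeal_ne_zero.mpr hJ)
      ((coeIdeal_le_coeIdeal K).mpr hIJ)

theorem st_ne_bot (s : StarOperation D K) {I : Ideal D} (h : I ≠ ⊥) : s.st I ≠ ⊥ :=
  fun e => h (le_bot_iff.mp (e ▸ s.le_st I))

theorem st_idem (s : StarOperation D K) (I : Ideal D) : s.st (s.st I) = s.st I := by
  by_cases h : I = ⊥
  · simp [h, st_bot]
  · rw [← coeIdeal_inj (K := K), s.coe_st (s.st_ne_bot h), s.coe_st h]
    exact s.star_idem _ (coeIdeal_ne_zero.mpr h)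

theorem st_span_mul (s : StarOperation D K) (x : D) (I : Ideal D) :
    s.st (Ideal.span {x} * I) = Ideal.span {x} * s.st I := by
  by_cases h : I = ⊥
  · simp [h, st_bot]
  by_cases hx : x = 0
  · simp [hx, st_bot]
  have h1 : Ideal.span {x} * I ≠ ⊥ := mul_ne_zero (by simpa using hx) h
  rw [← coeIdeal_inj (K := K), s.coe_st h1, coeIdeal_mul, coeIdeal_mul, s.coe_st h,
    coeIdeal_span_singleton]
  exact s.star_smul _ _ (by simpa using hx) (coeIdeal_ne_zero.mpr h)

theorem st_fin (s : StarOperation D K) (hs : s.FiniteCharacter) {I : Ideal D} {x : D}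
    (hx : x ∈ s.st I) : ∃ J : Ideal D, J.FG ∧ J ≤ I ∧ x ∈ s.st J := by
  by_cases h : I = ⊥
  · subst h
    exact ⟨⊥, Submodule.fg_bot, le_rfl, hx⟩
  have hx' : algebraMap D K x ∈ s.star (I : FractionalIdeal D⁰ K) := by
    rw [← s.coe_st h]
    exact mem_coeIdeal_of_mem _ hx
  obtain ⟨J, hJ0, hJfg, hJI, hxJ⟩ := hs _ (coeIdeal_ne_zero.mpr h) _ hx'
  obtain ⟨J', rfl⟩ := le_one_iff_exists_coeIdeal.mp (hJI.trans coeIdeal_le_one)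
  refine ⟨J', (coeIdeal_fg D⁰ (IsFractionRing.injective D K) J').mp hJfg,
    (coeIdeal_le_coeIdeal K).mp hJI, ?_⟩
  rw [← s.coe_st (coeIdeal_ne_zero.mp hJ0)] at hxJ
  obtain ⟨y, hy, hyx⟩ := (mem_coeIdeal _).mp hxJ
  rwa [← IsFractionRing.injective D K hyx]

theorem isStarIdeal_iff (s : StarOperation D K) (I : Ideal D) :
    s.IsStarIdeal I ↔ I ≠ ⊥ ∧ s.st I = I := by
  unfold IsStarIdeal
  refine and_congr_right fun h => ?_
  rw [← s.coe_st h, coeIdeal_inj]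

theorem st_span (s : StarOperation D K) (x : D) : s.st (Ideal.span {x}) = Ideal.span {x} := by
  by_cases hx : x = 0
  · simp [hx, st_bot]
  have h1 : Ideal.span {x} ≠ ⊥ := by simpa using hx
  rw [← coeIdeal_inj (K := K), s.coe_st h1, coeIdeal_span_singleton]
  exact s.star_spanSingleton _ (by simpa using hx)

/-- If `c • I ⊆ J`, `a • I ⊆ J`, `J` star-closed and `(c, A)` star-comaximal, then `I ⊆ J`. -/
theorem mem_of_comax (s : StarOperation D K) {J A : Ideal D} (hJ : s.st J = J)
    (hA : s.st A = ⊤) (i : D) (h : ∀ a ∈ A, a * i ∈ J) : i ∈ J := by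
  have h1 : Ideal.span {i} * A ≤ J := by
    rw [Ideal.span_singleton_mul_le_iff]
    intro z hz
    rw [mul_comm]
    exact h z hz
  have h2 := s.st_mono h1
  rw [st_span_mul, hA, hJ, Ideal.mul_top] at h2
  exact h2 (Ideal.mem_span_singleton_self i)

theorem IsMaxStarIdeal.st_eq {s : StarOperation D K} {M : Ideal D} (h : s.IsMaxStarIdeal M) :
    s.st M = M := ((s.isStarIdeal_iff M).mp h.2.1).2

theorem IsMaxStarIdeal.ne_bot {s : StarOperation D K} {M : Ideal D} (h : s.IsMaxStarIdeal M) :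
    M ≠ ⊥ := h.2.1.1

/-- Anything star-proper containing a maximal star ideal equals it. -/
theorem IsMaxStarIdeal.eq_of_le {s : StarOperation D K} {M J : Ideal D}
    (h : s.IsMaxStarIdeal M) (hMJ : M ≤ J) (hJ : s.st J ≠ ⊤) : J ≤ M := by
  have h0 : J ≠ ⊥ := fun e => h.ne_bot (le_bot_iff.mp (e ▸ hMJ))
  have := h.2.2 (s.st J) hJ ((s.isStarIdeal_iff _).mpr ⟨s.st_ne_bot h0, s.st_idem J⟩)
    (hMJ.trans (s.le_st J))
  exact this ▸ s.le_st J

theorem IsMaxStarIdeal.isPrime {s : StarOperation D K} {M : Ideal D}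
    (h : s.IsMaxStarIdeal M) : M.IsPrime := by
  refine ⟨h.1, fun {a b} hab => ?_⟩
  by_contra! hc
  have htop : s.st (M ⊔ Ideal.span {a}) = ⊤ := by
    by_contra hne
    exact hc.1 (h.eq_of_le le_sup_left hne
      (Ideal.mem_sup_right (Ideal.mem_span_singleton_self a)))
  refine hc.2 (s.mem_of_comax h.st_eq htop b fun z hz => ?_)
  obtain ⟨m, hm, n, hn, rfl⟩ := Submodule.mem_sup.mp hz
  obtain ⟨k, rfl⟩ := Ideal.mem_span_singleton'.mp hn
  rw [add_mul]
  refine M.add_mem (M.mul_mem_right _ hm) ?_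
  rw [mul_assoc]
  exact M.mul_mem_left _ hab

theorem exists_max (s : StarOperation D K) (hs : s.FiniteCharacter) {I : Ideal D} (h0 : I ≠ ⊥)
    (h : s.st I ≠ ⊤) : ∃ M, s.IsMaxStarIdeal M ∧ I ≤ M := by
  obtain ⟨M, hIM, hM⟩ := zorn_le_nonempty₀ {J : Ideal D | J ≠ ⊤ ∧ s.st J = J} (by
    intro c hc hch y hy
    have hne : c.Nonempty := ⟨y, hy⟩
    have hdir := hch.directedOn
    refine ⟨sSup c, ⟨?_, ?_⟩, fun z hz => le_sSup hz⟩
    · intro htop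
      have : (1 : D) ∈ sSup c := htop ▸ Submodule.mem_top
      obtain ⟨J, hJ, h1⟩ := (Submodule.mem_sSup_of_directed hne hdir).mp this
      exact (hc hJ).1 ((Ideal.eq_top_iff_one J).mpr h1)
    · refine le_antisymm (fun x hx => ?_) (s.le_st _)
      obtain ⟨A, hA, hAc, hxA⟩ := s.st_fin hs hx
      obtain ⟨J, hJ, hAJ⟩ :=
        (CompleteLattice.isCompactElement_iff_le_of_directed_sSup_le _ A).mp
          ((Submodule.fg_iff_compact A).mp hA) c hne hdir hAc
      have := s.st_mono hAJ hxA
      rw [(hc hJ).2] at this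
      exact le_sSup hJ this) (s.st I) ⟨h, s.st_idem I⟩
  have hIM' := (s.le_st I).trans hIM
  refine ⟨M, ⟨hM.prop.1, (s.isStarIdeal_iff M).mpr
    ⟨fun e => h0 (le_bot_iff.mp (e ▸ hIM')), hM.prop.2⟩, fun J hJ hJs hMJ => ?_⟩, hIM'⟩
  exact le_antisymm (hM.le_of_ge ⟨hJ, ((s.isStarIdeal_iff J).mp hJs).2⟩ hMJ) hMJ

theorem fg_le_sup {M N J : Ideal D} (hJ : J.FG) (h : J ≤ M ⊔ N) :
    ∃ A B : Ideal D, A.FG ∧ B.FG ∧ A ≤ M ∧ B ≤ N ∧ J ≤ A ⊔ B := by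
  classical
  obtain ⟨F, rfl⟩ := hJ
  induction F using Finset.induction_on with
  | empty => exact ⟨⊥, ⊥, Submodule.fg_bot, Submodule.fg_bot, bot_le, bot_le, by simp⟩
  | insert a F _ ih =>
    rw [Finset.coe_insert, Ideal.span_insert, sup_le_iff] at h
    obtain ⟨A, B, hA, hB, hAM, hBN, hle⟩ := ih h.2
    obtain ⟨m, hm, n, hn, hmn⟩ := Submodule.mem_sup.mp
      (h.1 (Ideal.mem_span_singleton_self a))
    refine ⟨A ⊔ Ideal.span {m}, B ⊔ Ideal.span {n}, Submodule.FG.sup hA (Submodule.fg_span_singleton m),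
      Submodule.FG.sup hB (Submodule.fg_span_singleton n), sup_le hAM ?_, sup_le hBN ?_, ?_⟩
    · rwa [Ideal.span_singleton_le_iff_mem]
    · rwa [Ideal.span_singleton_le_iff_mem]
    · rw [Finset.coe_insert, Ideal.span_insert, sup_le_iff]
      constructor
      · rw [Ideal.span_singleton_le_iff_mem, ← hmn]
        exact add_mem
          (Ideal.mem_sup_left (Ideal.mem_sup_right (Ideal.mem_span_singleton_self m)))
          (Ideal.mem_sup_right (Ideal.mem_sup_right (Ideal.mem_span_singleton_self n)))
      · exact hle.trans (sup_le_sup le_sup_left le_sup_left)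

/-- A homogeneous element lies in at most one maximal star ideal. -/
theorem homog_unique (s : StarOperation D K) (hs : s.FiniteCharacter) {y : D}
    (hy : s.IsHomog (Ideal.span {y})) {M N : Ideal D} (hM : s.IsMaxStarIdeal M)
    (hN : s.IsMaxStarIdeal N) (hyM : y ∈ M) (hyN : y ∈ N) : M = N := by
  by_contra hne
  have hy0 : Ideal.span {y} ≠ ⊥ := hy.2.1.1
  have htop : s.st (M ⊔ N) = ⊤ := by
    by_contra h
    have h1 := hM.eq_of_le le_sup_left h
    have h2 := hN.eq_of_le le_sup_right h
    exact hne (le_antisymm (le_sup_left.trans h2) (le_sup_right.trans h1))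
  obtain ⟨J, hJ, hJle, h1⟩ := s.st_fin hs (htop ▸ Submodule.mem_top : (1 : D) ∈ s.st (M ⊔ N))
  obtain ⟨A, B, hA, hB, hAM, hBN, hle⟩ := fg_le_sup hJ hJle
  have key : ∀ A M : Ideal D, A.FG → A ≤ M → s.IsMaxStarIdeal M → y ∈ M →
      s.st (A ⊔ Ideal.span {y}) ≠ ⊤ ∧ s.IsStarIdeal (s.st (A ⊔ Ideal.span {y})) ∧
      s.IsFiniteTypeStarIdeal (s.st (A ⊔ Ideal.span {y})) ∧
      Ideal.span {y} ≤ s.st (A ⊔ Ideal.span {y}) := by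
    intro A M hA hAM hM hyM
    have hb : A ⊔ Ideal.span {y} ≠ ⊥ := fun e => hy0 (le_bot_iff.mp (e ▸ le_sup_right))
    refine ⟨fun e => hM.1 ?_, (s.isStarIdeal_iff _).mpr ⟨s.st_ne_bot hb, s.st_idem _⟩,
      ⟨_, hb, Submodule.FG.sup hA (Submodule.fg_span_singleton y), (s.coe_st hb).symm⟩,
      le_sup_right.trans (s.le_st _)⟩
    have h2 : A ⊔ Ideal.span {y} ≤ M := sup_le hAM (by rwa [Ideal.span_singleton_le_iff_mem])
    have h3 := s.st_mono h2
    rw [e, hM.st_eq] at h3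
    exact top_le_iff.mp h3
  obtain ⟨a1, a2, a3, a4⟩ := key A M hA hAM hM hyM
  obtain ⟨b1, b2, b3, b4⟩ := key B N hB hBN hN hyN
  refine hy.2.2.2 _ _ a1 b1 a2 b2 a3 b3 a4 b4 ?_
  have hb : s.st (A ⊔ Ideal.span {y}) + s.st (B ⊔ Ideal.span {y}) ≠ ⊥ :=
    fun e => a2.1 (le_bot_iff.mp (e ▸ le_sup_left))
  rw [← s.coe_st hb, coeIdeal_eq_one, Ideal.one_eq_top, Ideal.eq_top_iff_one]
  refine s.st_mono (hle.trans ?_) h1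
  exact sup_le_sup (le_sup_left.trans (s.le_st _)) (le_sup_left.trans (s.le_st _))

/-- Elementwise consequence of star-invertibility. -/
def LocPrin (s : StarOperation D K) (I : Ideal D) : Prop :=
  ∀ M, s.IsMaxStarIdeal M → ∃ j ∈ I, ∃ c, c ∉ M ∧ ∀ i ∈ I, j ∣ c * i

theorem inv_facts {I : Ideal D} (h : I ≠ ⊥) :
    (I : FractionalIdeal D⁰ K) * (I : FractionalIdeal D⁰ K)⁻¹ ≠ 0 ∧
    (I : FractionalIdeal D⁰ K) * (I : FractionalIdeal D⁰ K)⁻¹ ≤ 1 := by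
  have h0 : (I : FractionalIdeal D⁰ K) ≠ 0 := coeIdeal_ne_zero.mpr h
  constructor
  · intro e
    have h1 : (1 : K) ∈ (I : FractionalIdeal D⁰ K)⁻¹ := by
      rw [mem_inv_iff h0]
      intro y hy
      rw [one_mul]
      exact coeIdeal_le_one hy
    obtain ⟨i, hi, hi0⟩ := Submodule.exists_mem_ne_zero_of_ne_bot h
    have h2 := FractionalIdeal.mul_mem_mul (mem_coeIdeal_of_mem D⁰ hi) h1
    rw [e, mem_zero_iff, mul_one] at h2
    exact hi0 (IsFractionRing.injective D K (by rw [h2, map_zero]))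
  · rw [FractionalIdeal.mul_le]
    intro i hi j hj
    rw [mul_comm]
    exact (mem_inv_iff h0).mp hj i hi

theorem locPrin_of_inv (s : StarOperation D K) {I : Ideal D} (h : I ≠ ⊥)
    (hI : s.StarInvertible I) : s.LocPrin I := by
  intro M hM
  by_contra! hc
  have h0 : (I : FractionalIdeal D⁰ K) ≠ 0 := coeIdeal_ne_zero.mpr h
  have hle : (I : FractionalIdeal D⁰ K) * (I : FractionalIdeal D⁰ K)⁻¹ ≤ M := by
    rw [FractionalIdeal.mul_le]
    intro i hi u hu
    have hu' := (mem_inv_iff h0).mp hu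
    obtain ⟨j, hj, rfl⟩ := (mem_coeIdeal _).mp hi
    obtain ⟨c, hcu⟩ := (mem_one_iff D⁰).mp (hu' _ hi)
    by_cases hcM : c ∈ M
    · rw [mul_comm, ← hcu]
      exact mem_coeIdeal_of_mem _ hcM
    · exfalso
      obtain ⟨i', hi', hnd⟩ := hc j hj c hcM
      obtain ⟨d, hd⟩ := (mem_one_iff D⁰).mp (hu' _ (mem_coeIdeal_of_mem D⁰ hi'))
      refine hnd ⟨d, IsFractionRing.injective D K ?_⟩
      rw [map_mul, map_mul, hcu, hd]
      ring
  have h2 := s.star_mono _ _ (inv_facts h).1 (coeIdeal_ne_zero.mpr hM.ne_bot) hle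
  rw [hM.2.1.2] at h2
  have h3 : s.star ((I : FractionalIdeal D⁰ K) * (I : FractionalIdeal D⁰ K)⁻¹) = 1 := hI
  rw [h3, ← coeIdeal_top, coeIdeal_le_coeIdeal] at h2
  exact hM.1 (top_le_iff.mp h2)

/-- Splitting a product of elements lying in one maximal star ideal relative to `M`. -/
theorem split_prod (s : StarOperation D K) {M : Ideal D} (hM : s.IsMaxStarIdeal M)
    (T : Multiset D)
    (hT : ∀ y ∈ T, ∀ M N, s.IsMaxStarIdeal M → s.IsMaxStarIdeal N → y ∈ M → y ∈ N → M = N) :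
    ∃ a b, T.prod = a * b ∧ b ∉ M ∧ ∀ N, s.IsMaxStarIdeal N → a ∈ N → N = M := by
  induction T using Multiset.induction_on with
  | empty =>
    refine ⟨1, 1, by simp, fun h => hM.1 ((Ideal.eq_top_iff_one _).mpr h), fun N hN h =>
      absurd ((Ideal.eq_top_iff_one _).mpr h) hN.1⟩
  | cons y T ih =>
    obtain ⟨a, b, hab, hb, ha⟩ := ih fun z hz => hT z (Multiset.mem_cons_of_mem hz)
    have hy := hT y (Multiset.mem_cons_self y T)
    by_cases hyM : y ∈ M
    · refine ⟨y * a, b, by rw [Multiset.prod_cons, hab, mul_assoc], hb, fun N hN h => ?_⟩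
      rcases hN.isPrime.mem_or_mem h with h | h
      · exact hy N M hN hM h hyM
      · exact ha N hN h
    · refine ⟨a, y * b, by rw [Multiset.prod_cons, hab]; ring, fun h => ?_, ha⟩
      rcases hM.isPrime.mem_or_mem h with h | h
      · exact hyM h
      · exact hb h

theorem finite_max (s : StarOperation D K) (T : Multiset D)
    (hT : ∀ y ∈ T, ∀ M N, s.IsMaxStarIdeal M → s.IsMaxStarIdeal N → y ∈ M → y ∈ N → M = N) :
    {M | s.IsMaxStarIdeal M ∧ T.prod ∈ M}.Finite := by
  induction T using Multiset.induction_on with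
  | empty =>
    refine Set.Finite.subset Set.finite_empty fun M hM => ?_
    exact hM.1.1 ((Ideal.eq_top_iff_one _).mpr (by simpa using hM.2))
  | cons y T ih =>
    have h1 := ih fun z hz => hT z (Multiset.mem_cons_of_mem hz)
    have hy := hT y (Multiset.mem_cons_self y T)
    have h2 : {M | s.IsMaxStarIdeal M ∧ y ∈ M}.Finite :=
      Set.Subsingleton.finite fun M hM N hN => hy M N hM.1 hN.1 hM.2 hN.2
    refine (h2.union h1).subset fun M hM => ?_
    have h3 := hM.2
    rw [Multiset.prod_cons] at h3
    rcases hM.1.isPrime.mem_or_mem h3 with h | h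
    · exact Or.inl ⟨hM.1, h⟩
    · exact Or.inr ⟨hM.1, h⟩

theorem principal_core (s : StarOperation D K) (hs : s.FiniteCharacter)
    (H : ∀ x : D, x ≠ 0 → ∀ M, s.IsMaxStarIdeal M →
      ∃ a b, x = a * b ∧ b ∉ M ∧ ∀ N, s.IsMaxStarIdeal N → a ∈ N → N = M)
    (n : ℕ) : ∀ (S : Finset (Ideal D)), S.card ≤ n → ∀ I : Ideal D, I ≠ ⊥ → s.st I = I →
      s.LocPrin I → (∀ M, s.IsMaxStarIdeal M → I ≤ M → M ∈ S) → ∃ a, I = Ideal.span {a} := by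
  classical
  induction n with
  | zero =>
    intro S hS I h0 hI _ hc
    by_cases ht : s.st I = ⊤
    · exact ⟨1, by rw [← hI, ht, Ideal.span_singleton_one]⟩
    · obtain ⟨M, hM, hIM⟩ := s.exists_max hs h0 ht
      have := hc M hM hIM
      simp_all
  | succ n ih =>
    intro S hS I h0 hI hloc hc
    by_cases ht : s.st I = ⊤
    · exact ⟨1, by rw [← hI, ht, Ideal.span_singleton_one]⟩
    obtain ⟨M, hM, hIM⟩ := s.exists_max hs h0 ht
    obtain ⟨j, hj, c, hcM, hdvd⟩ := hloc M hM
    have hj0 : j ≠ 0 := by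
      rintro rfl
      obtain ⟨i, hi, hi0⟩ := Submodule.exists_mem_ne_zero_of_ne_bot h0
      rcases mul_eq_zero.mp (zero_dvd_iff.mp (hdvd i hi)) with h | h
      · exact hcM (h ▸ M.zero_mem)
      · exact hi0 h
    obtain ⟨a, b, rfl, hb, ha⟩ := H j hj0 M hM
    have ha0 : a ≠ 0 := left_ne_zero_of_mul hj0
    -- `I ≤ aD`
    have htop : s.st (Ideal.span {a} ⊔ Ideal.span {c}) = ⊤ := by
      by_contra hne
      obtain ⟨N, hN, hle⟩ := s.exists_max hs
        (fun e => ha0 (by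
          have : Ideal.span {a} ≤ ⊥ := e ▸ le_sup_left
          simpa using this)) hne
      have haN : a ∈ N := hle (Ideal.mem_sup_left (Ideal.mem_span_singleton_self a))
      have hcN : c ∈ N := hle (Ideal.mem_sup_right (Ideal.mem_span_singleton_self c))
      exact hcM (ha N hN haN ▸ hcN)
    have hIa : ∀ i ∈ I, a ∣ i := by
      intro i hi
      rw [← Ideal.mem_span_singleton]
      refine s.mem_of_comax (s.st_span a) htop i fun z hz => ?_
      obtain ⟨m, hm, k, hk, rfl⟩ := Submodule.mem_sup.mp hz
      rw [Ideal.mem_span_singleton] at hm hk ⊢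
      rw [add_mul]
      refine dvd_add (hm.mul_right i) ?_
      obtain ⟨k', rfl⟩ := hk
      have := (Dvd.intro _ rfl : a ∣ a * b).trans (hdvd i hi)
      rw [mul_right_comm]
      exact this.mul_right k'
    let I' : Ideal D := Submodule.comap (LinearMap.mulLeft D a) I
    have hmem : ∀ x, x ∈ I' ↔ a * x ∈ I := fun x => Iff.rfl
    have hII' : I = Ideal.span {a} * I' := by
      ext x
      rw [Ideal.mem_span_singleton_mul]
      constructor
      · intro hx
        obtain ⟨z, rfl⟩ := hIa x hx
        exact ⟨z, hx, rfl⟩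
      · rintro ⟨z, hz, rfl⟩
        exact hz
    have h0' : I' ≠ ⊥ := by
      intro e
      rw [e] at hII'
      exact h0 (by simpa using hII')
    have hst' : s.st I' = I' := by
      have h1 : Ideal.span {a} * s.st I' = Ideal.span {a} * I' := by
        rw [← st_span_mul, ← hII', hI]
      exact (Ideal.span_singleton_mul_right_inj ha0).mp h1
    have hle' : I ≤ I' := fun x hx => I.mul_mem_left a hx
    have hbI' : b ∈ I' := hj
    have hloc' : s.LocPrin I' := by
      intro N hN
      obtain ⟨j, hj, c, hcN, hd⟩ := hloc N hN
      obtain ⟨j', rfl⟩ := hIa j hj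
      refine ⟨j', hj, c, hcN, fun i hi => ?_⟩
      have := hd (a * i) hi
      rw [mul_left_comm] at this
      exact (mul_dvd_mul_iff_left ha0).mp this
    obtain ⟨d, hd⟩ := ih (S.erase M) (by
      rw [Finset.card_erase_of_mem (hc M hM hIM)]; omega) I' h0' hst' hloc' (by
      intro N hN hIN
      refine Finset.mem_erase.mpr ⟨?_, hc N hN (hle'.trans hIN)⟩
      rintro rfl
      exact hb (hIN hbI'))
    exact ⟨a * d, by rw [hII', hd, Ideal.span_singleton_mul_span_singleton]⟩

theorem inv_of_prod (s : StarOperation D K) {J R : Ideal D} {x : D} (hx : x ≠ 0)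
    (hJR : J * R ≠ ⊥)
    (h : s.star ((J * R : Ideal D) : FractionalIdeal D⁰ K) =
      ((Ideal.span {x} : Ideal D) : FractionalIdeal D⁰ K)) : s.StarInvertible J := by
  have hJ : J ≠ ⊥ := left_ne_zero_of_mul hJR
  have hJ0 : (J : FractionalIdeal D⁰ K) ≠ 0 := coeIdeal_ne_zero.mpr hJ
  have hJR0 : ((J * R : Ideal D) : FractionalIdeal D⁰ K) ≠ 0 := coeIdeal_ne_zero.mpr hJR
  have hxK : algebraMap D K x ≠ 0 := by simpa using hx
  have hsp : spanSingleton D⁰ (algebraMap D K x)⁻¹ * spanSingleton D⁰ (algebraMap D K x) = 1 := by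
    rw [spanSingleton_mul_spanSingleton, inv_mul_cancel₀ hxK, spanSingleton_one]
  rw [coeIdeal_span_singleton] at h
  have hle := s.le_star _ hJR0
  rw [h] at hle
  have h1 : spanSingleton D⁰ (algebraMap D K x)⁻¹ * R ≤ (J : FractionalIdeal D⁰ K)⁻¹ := by
    rw [inv_eq, le_div_iff_mul_le hJ0, ← hsp, mul_assoc, mul_comm (R : FractionalIdeal D⁰ K),
      ← coeIdeal_mul]
    exact mul_le_mul_right hle _
  have h2 : spanSingleton D⁰ (algebraMap D K x)⁻¹ * ((J * R : Ideal D) : FractionalIdeal D⁰ K) ≤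
      (J : FractionalIdeal D⁰ K) * (J : FractionalIdeal D⁰ K)⁻¹ := by
    rw [coeIdeal_mul, mul_left_comm]
    exact mul_le_mul_right h1 _
  have hne : spanSingleton D⁰ (algebraMap D K x)⁻¹ *
      ((J * R : Ideal D) : FractionalIdeal D⁰ K) ≠ 0 := by
    intro e
    apply hJR0
    rw [← one_mul ((J * R : Ideal D) : FractionalIdeal D⁰ K), ← hsp,
      mul_comm (spanSingleton D⁰ _), mul_assoc, e, mul_zero]
  have h3 := s.star_mono _ _ hne (inv_facts hJ).1 h2
  rw [s.star_smul _ _ (inv_ne_zero hxK) hJR0, h, hsp] at h3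
  exact le_antisymm (s.star_le_one (inv_facts hJ).1 (inv_facts hJ).2) h3

end StarOperation

/-- `D` is a `*`-SH domain with trivial `*`-class group iff `D` is a
`*`-wf-SH domain, i.e. every nonzero nonunit of `D` is a finite product of
`*`-wf-homogeneous elements. -/
theorem SH_trivialClassGroup_iff_wfSH {D K : Type*} [CommRing D] [IsDomain D] [Field K]
    [Algebra D K] [IsFractionRing D K] (s : StarOperation D K) (hs : s.FiniteCharacter) :
    (s.IsSHDomain ∧ s.TrivialStarClassGroup) ↔
    (∀ x : D, x ≠ 0 → ¬IsUnit x →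
      ∃ T : Multiset D, T ≠ 0 ∧ (∀ y ∈ T, s.IsWfHomogElem y) ∧ T.prod = x) := by
  classical
  constructor
  · rintro ⟨hSH, hcl⟩ x hx hu
    obtain ⟨T, hT, hprod⟩ := hSH x hx hu
    have hT0 : T.prod ≠ ⊥ := by
      intro e
      have h0 : (0 : Ideal D) ∈ T := Multiset.prod_eq_zero_iff.mp e
      exact (hT _ h0).2.1.1 rfl
    have hprin : ∀ J ∈ T, ∃ g : D, Ideal.span {g} = J := by
      intro J hJ
      have he : J * (T.erase J).prod = T.prod := Multiset.prod_erase hJ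
      have hinv : s.StarInvertible J := s.inv_of_prod (R := (T.erase J).prod) hx
        (by rw [he]; exact hT0) (by rw [he]; exact hprod)
      obtain ⟨g, hg⟩ := hcl J (hT J hJ).2.1 hinv
      exact ⟨g, hg.symm⟩
    have hprin' : ∀ J : Ideal D, ∃ g : D, J ∈ T → Ideal.span {g} = J := fun J => by
      by_cases hJ : J ∈ T
      · obtain ⟨g, hg⟩ := hprin J hJ
        exact ⟨g, fun _ => hg⟩
      · exact ⟨0, fun h => absurd h hJ⟩
    choose g hg using hprin'
    have hspan : ∀ U : Multiset (Ideal D), (∀ J ∈ U, J ∈ T) →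
        U.prod = Ideal.span {(U.map g).prod} := by
      intro U
      induction U using Multiset.induction_on with
      | empty => intro _; simp
      | cons J U ih =>
        intro hU
        rw [Multiset.prod_cons, ih fun J' h => hU J' (Multiset.mem_cons_of_mem h),
          Multiset.map_cons, Multiset.prod_cons, ← Ideal.span_singleton_mul_span_singleton,
          hg J (hU J (Multiset.mem_cons_self J U))]
    have hTs := hspan T fun _ h => h
    have hst : T.prod = Ideal.span {x} := by
      rw [← s.coe_st hT0, FractionalIdeal.coeIdeal_inj, hTs, s.st_span, ← hTs] at hprod
      exact hprod
    rw [hTs, Ideal.span_singleton_eq_span_singleton] at hst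
    obtain ⟨u, hux⟩ := hst
    have hwf : ∀ J ∈ T, s.IsWfHomog J := fun J hJ =>
      ⟨hT J hJ, fun _ J' h1 h2 _ => hcl J' h1 h2⟩
    have hTne : T ≠ 0 := by
      rintro rfl
      apply hu
      rw [← hux]
      simp
    obtain ⟨J, hJ⟩ := Multiset.exists_mem_of_ne_zero hTne
    obtain ⟨U, rfl⟩ := Multiset.exists_cons_of_mem hJ
    refine ⟨(g J * u) ::ₘ U.map g, Multiset.cons_ne_zero, ?_, ?_⟩
    · intro y hy
      unfold StarOperation.IsWfHomogElem
      rcases Multiset.mem_cons.mp hy with rfl | hy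
      · have : Ideal.span {g J * (u : D)} = J := by
          rw [Ideal.span_singleton_mul_right_unit u.isUnit, hg J hJ]
        rw [this]
        exact hwf J hJ
      · obtain ⟨J', hJ', rfl⟩ := Multiset.mem_map.mp hy
        rw [hg J' (Multiset.mem_cons_of_mem hJ')]
        exact hwf J' (Multiset.mem_cons_of_mem hJ')
    · rw [← hux, Multiset.map_cons, Multiset.prod_cons, Multiset.prod_cons]
      ring
  · intro H
    constructor
    · intro x hx hu
      obtain ⟨T, -, hT, rfl⟩ := H x hx hu
      refine ⟨T.map fun y => Ideal.span {y}, ?_, ?_⟩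
      · intro J hJ
        obtain ⟨y, hy, rfl⟩ := Multiset.mem_map.mp hJ
        exact (hT y hy).1
      · rw [Ideal.multiset_prod_span_singleton,
          ← s.coe_st (by simpa using hx), s.st_span]
    · intro I hI hinv
      have H' : ∀ x : D, x ≠ 0 → ∀ M, s.IsMaxStarIdeal M →
          ∃ a b, x = a * b ∧ b ∉ M ∧ ∀ N, s.IsMaxStarIdeal N → a ∈ N → N = M := by
        intro x hx M hM
        by_cases hu : IsUnit x
        · exact ⟨1, x, by simp, fun h => hM.1 (Ideal.eq_top_of_isUnit_mem _ h hu),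
            fun N hN h => absurd ((Ideal.eq_top_iff_one _).mpr h) hN.1⟩
        · obtain ⟨T, -, hT, rfl⟩ := H x hx hu
          exact s.split_prod hM T fun y hy M N hM hN h1 h2 =>
            s.homog_unique hs (hT y hy).1 hM hN h1 h2
      obtain ⟨h0, hst⟩ := (s.isStarIdeal_iff I).mp hI
      obtain ⟨x, hxI, hx⟩ := Submodule.exists_mem_ne_zero_of_ne_bot h0
      have hfin : {M | s.IsMaxStarIdeal M ∧ x ∈ M}.Finite := by
        by_cases hu : IsUnit x
        · exact Set.Finite.subset Set.finite_empty fun M hM =>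
            hM.1.1 (Ideal.eq_top_of_isUnit_mem _ hM.2 hu)
        · obtain ⟨T, -, hT, rfl⟩ := H x hx hu
          exact s.finite_max T fun y hy M N hM hN h1 h2 =>
            s.homog_unique hs (hT y hy).1 hM hN h1 h2
      obtain ⟨a, ha⟩ := s.principal_core hs H' _ hfin.toFinset le_rfl I h0 hst
        (s.locPrin_of_inv h0 hinv) fun M hM hIM => by
          simpa using ⟨hM, hIM hxI⟩
      exact ⟨a, ha⟩
end

section
/- Let D be an integral domain such that the localization D_M is a GCD domain for every maximal ideal M of D, and suppose there is a family F of nonzero prime ideals of D such that D = ∩_{P ∈ F} D_P (the intersection taken inside the quotient field of D) and this intersection is locally finite, i.e., no nonzero nonunit of D belongs to infinitely many members of F. If every invertible ideal of D is principal, then D is a GCD domain. -/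
open scoped nonZeroDivisors

/-- Local principality of `aD ∩ bD` at a maximal ideal, elementwise. -/
lemma local_gen {D : Type*} [CommRing D] [IsDomain D] (M : Ideal D) [M.IsMaximal]
    (a b : D)
    (h : (Ideal.span {algebraMap D (Localization.AtPrime M) a} ⊓
      Ideal.span {algebraMap D (Localization.AtPrime M) b} :
        Ideal (Localization.AtPrime M)).IsPrincipal) :
    ∃ g ∈ (Ideal.span {a} ⊓ Ideal.span {b} : Ideal D),
      ∀ z ∈ (Ideal.span {a} ⊓ Ideal.span {b} : Ideal D), ∃ t, t ∉ M ∧ g ∣ t * z := by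
  have hinj : Function.Injective (algebraMap D (Localization.AtPrime M)) :=
    IsLocalization.injective _ M.primeCompl_le_nonZeroDivisors
  obtain ⟨h, hh⟩ := h
  obtain ⟨g₀, s, hs⟩ := IsLocalization.exists_mk'_eq M.primeCompl h
  have hsp : h * algebraMap D (Localization.AtPrime M) s =
      algebraMap D (Localization.AtPrime M) g₀ := by
    rw [← hs]; exact IsLocalization.mk'_spec _ _ _
  have hmem : h ∈ (Ideal.span {algebraMap D (Localization.AtPrime M) a} ⊓
      Ideal.span {algebraMap D (Localization.AtPrime M) b} :
        Ideal (Localization.AtPrime M)) := by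
    rw [hh]; exact Submodule.mem_span_singleton_self h
  have key : ∀ c : D, h ∈ Ideal.span {algebraMap D (Localization.AtPrime M) c} →
      ∃ u, u ∉ M ∧ c ∣ u * g₀ := by
    intro c hc
    obtain ⟨y, hy⟩ := Ideal.mem_span_singleton'.mp hc
    obtain ⟨p, q, hq⟩ := IsLocalization.exists_mk'_eq M.primeCompl y
    have hqs : y * algebraMap D (Localization.AtPrime M) q =
      algebraMap D (Localization.AtPrime M) p := by
      rw [← hq]; exact IsLocalization.mk'_spec _ _ _
    refine ⟨q, q.2, p * s, hinj ?_⟩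
    simp only [map_mul]
    rw [← hsp, ← hqs, ← hy]; ring
  obtain ⟨u, hu, hua⟩ := key a hmem.1
  obtain ⟨v, hv, hvb⟩ := key b hmem.2
  refine ⟨u * v * g₀, ⟨?_, ?_⟩, ?_⟩
  · refine Ideal.mem_span_singleton.mpr ?_
    rw [mul_right_comm]; exact hua.mul_right _
  · refine Ideal.mem_span_singleton.mpr ?_
    rw [mul_assoc]; exact hvb.mul_left _
  · rintro z ⟨hza, hzb⟩
    have hz : algebraMap D (Localization.AtPrime M) z ∈
      (Submodule.span _ {h} : Ideal (Localization.AtPrime M)) := by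
      rw [← hh]
      constructor
      · exact Ideal.mem_span_singleton.mpr (map_dvd _ (Ideal.mem_span_singleton.mp hza))
      · exact Ideal.mem_span_singleton.mpr (map_dvd _ (Ideal.mem_span_singleton.mp hzb))
    obtain ⟨y, hy⟩ := Ideal.mem_span_singleton'.mp hz
    obtain ⟨p, q, hq⟩ := IsLocalization.exists_mk'_eq M.primeCompl y
    have hqs : y * algebraMap D (Localization.AtPrime M) q =
      algebraMap D (Localization.AtPrime M) p := by
      rw [← hq]; exact IsLocalization.mk'_spec _ _ _
    refine ⟨u * v * (s * q), ?_, p, hinj ?_⟩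
    · have : u * v * (s * q) ∈ M.primeCompl :=
        mul_mem (mul_mem (show u ∈ M.primeCompl from hu) (show v ∈ M.primeCompl from hv))
          (mul_mem s.2 q.2)
      exact this
    · simp only [map_mul]
      rw [← hsp, ← hqs, ← hy]; ring

/-- Let `D` be an integral domain with quotient field `K` such that every
localization `D_M` at a maximal ideal `M` is a GCD domain, and suppose there is a family
`F` of nonzero prime ideals of `D` such that `D = ∩_{P ∈ F} D_P` inside `K` and the
intersection is locally finite. If every invertible ideal of `D` is principal, then `D`
is a GCD domain. -/
theorem gcd_of_locallyGCD_locallyFinite_trivialPicard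
    {D K : Type*} [CommRing D] [IsDomain D] [Field K] [Algebra D K] [IsFractionRing D K]
    (hloc : ∀ (M : Ideal D) [M.IsMaximal],
      ∀ a b : Localization.AtPrime M, a ≠ 0 → b ≠ 0 →
        (Ideal.span {a} ⊓ Ideal.span {b} : Ideal (Localization.AtPrime M)).IsPrincipal)
    (F : Set (Ideal D)) (hFprime : ∀ P ∈ F, P.IsPrime ∧ P ≠ ⊥)
    (hFint : ∀ x : K,
      (∀ P ∈ F, ∃ a t : D, t ∉ P ∧ x * algebraMap D K t = algebraMap D K a) →
      ∃ d : D, algebraMap D K d = x)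
    (hFlf : ∀ x : D, x ≠ 0 → ¬IsUnit x → {P ∈ F | x ∈ P}.Finite)
    (hpic : ∀ I : Ideal D,
      (I : FractionalIdeal D⁰ K) * (I : FractionalIdeal D⁰ K)⁻¹ = 1 → I.IsPrincipal) :
    ∀ a b : D, a ≠ 0 → b ≠ 0 → (Ideal.span {a} ⊓ Ideal.span {b} : Ideal D).IsPrincipal := by
  intro a b ha hb
  have hlocal : ∀ (M : Ideal D) [M.IsMaximal],
      ∃ g ∈ (Ideal.span {a} ⊓ Ideal.span {b} : Ideal D),
      ∀ z ∈ (Ideal.span {a} ⊓ Ideal.span {b} : Ideal D), ∃ t, t ∉ M ∧ g ∣ t * z := by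
    intro M hM
    have hinj : Function.Injective (algebraMap D (Localization.AtPrime M)) :=
      IsLocalization.injective _ M.primeCompl_le_nonZeroDivisors
    exact local_gen M a b (hloc M _ _ ((map_ne_zero_iff _ hinj).mpr ha)
      ((map_ne_zero_iff _ hinj).mpr hb))
  have hxI : a * b ∈ (Ideal.span {a} ⊓ Ideal.span {b} : Ideal D) :=
    ⟨Ideal.mem_span_singleton.mpr (dvd_mul_right _ _),
      Ideal.mem_span_singleton.mpr (dvd_mul_left _ _)⟩
  have hx0 : a * b ≠ 0 := mul_ne_zero ha hb
  generalize a * b = x at hxI hx0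
  generalize (Ideal.span {a} ⊓ Ideal.span {b} : Ideal D) = I at hlocal hxI ⊢
  have hprime : ∀ P : Ideal D, ∃ g ∈ I, P ∈ F → ∀ z ∈ I, ∃ t, t ∉ P ∧ g ∣ t * z := by
    intro P
    by_cases hP : P ∈ F
    · obtain ⟨M, hM, hPM⟩ := Ideal.exists_le_maximal P (hFprime P hP).1.ne_top
      obtain ⟨g, hg, H⟩ := hlocal M
      refine ⟨g, hg, fun _ z hz => ?_⟩
      obtain ⟨t, ht, h⟩ := H z hz
      exact ⟨t, fun h' => ht (hPM h'), h⟩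
    · exact ⟨x, hxI, fun h => absurd h hP⟩
  choose G hGI hG using hprime
  have hfin : {P ∈ F | x ∈ P}.Finite := by
    by_cases hu : IsUnit x
    · convert Set.finite_empty
      ext P
      simp only [Set.mem_ofPred_eq, Set.mem_empty_iff_false, iff_false, not_and]
      exact fun hP hxP => (hFprime P hP).1.ne_top (Ideal.eq_top_of_isUnit_mem _ hxP hu)
    · exact hFlf x hx0 hu
  have main : ∀ (M : Ideal D) [M.IsMaximal], ∃ g ∈ I, g ≠ 0 ∧ ∃ s, s ∉ M ∧
      ∀ z ∈ I, g ∣ s * z := by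
    intro M hM
    obtain ⟨g, hg, H⟩ := hlocal M
    obtain ⟨s₀, hs₀, hs₀x⟩ := H x hxI
    have hg0 : g ≠ 0 := by
      rintro rfl
      rcases mul_eq_zero.mp (zero_dvd_iff.mp hs₀x) with h | h
      · exact hs₀ (h ▸ M.zero_mem)
      · exact hx0 h
    have H' : ∀ P : Ideal D, ∃ t, t ∉ M ∧ g ∣ t * G P := fun P => H _ (hGI P)
    choose σ hσM hσ using H'
    refine ⟨g, hg, hg0, s₀ * ∏ P ∈ hfin.toFinset, σ P, ?_, ?_⟩
    · have : s₀ * ∏ P ∈ hfin.toFinset, σ P ∈ M.primeCompl :=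
        mul_mem (show s₀ ∈ M.primeCompl from hs₀)
          (prod_mem fun P _ => (show σ P ∈ M.primeCompl from hσM P))
      exact this
    · intro z hz
      have hgK : algebraMap D K g ≠ 0 :=
        (map_ne_zero_iff _ (IsFractionRing.injective D K)).mpr hg0
      set s := s₀ * ∏ P ∈ hfin.toFinset, σ P with hs
      obtain ⟨d, hd⟩ := hFint (algebraMap D K (s * z) / algebraMap D K g) (by
        intro P hP
        have : ∃ t, t ∉ P ∧ g ∣ t * (s * z) := by
          by_cases hxP : x ∈ P
          · obtain ⟨t, ht, h⟩ := hG P hP z hz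
            refine ⟨t, ht, ?_⟩
            have h1 : σ P ∣ s := (Finset.dvd_prod_of_mem σ
              (hfin.mem_toFinset.mpr ⟨hP, hxP⟩)).mul_left _
            rw [show t * (s * z) = s * (t * z) by ring]
            exact (hσ P).trans (mul_dvd_mul h1 h)
          · refine ⟨x, hxP, ?_⟩
            rw [show x * (s * z) = (s₀ * x) * ((∏ P ∈ hfin.toFinset, σ P) * z) by rw [hs]; ring]
            exact hs₀x.mul_right _
        obtain ⟨t, ht, c, hc⟩ := this
        refine ⟨c, t, ht, ?_⟩
        rw [div_mul_eq_mul_div, div_eq_iff hgK, ← map_mul, ← map_mul, mul_comm (s * z) t, hc,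
          mul_comm])
      refine ⟨d, IsFractionRing.injective D K ?_⟩
      rw [map_mul (algebraMap D K) g d, hd, mul_div_cancel₀ _ hgK]
  have hI0 : (I : FractionalIdeal D⁰ K) ≠ 0 := by
    rw [FractionalIdeal.coeIdeal_ne_zero]
    rintro rfl
    exact hx0 (by simpa using hxI)
  apply hpic
  obtain ⟨L, hL⟩ := FractionalIdeal.le_one_iff_exists_coeIdeal.mp
    (FractionalIdeal.mul_one_div_le_one (I := (I : FractionalIdeal D⁰ K)))
  rw [← FractionalIdeal.inv_eq] at hL
  rw [← hL]
  suffices L = ⊤ by rw [this]; simp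
  by_contra hne
  obtain ⟨M, hM, hLM⟩ := Ideal.exists_le_maximal L hne
  obtain ⟨g, hg, hg0, s, hs, H⟩ := main M
  have hgK : algebraMap D K g ≠ 0 :=
    (map_ne_zero_iff _ (IsFractionRing.injective D K)).mpr hg0
  apply hs
  apply hLM
  have hmem : algebraMap D K s ∈ (L : FractionalIdeal D⁰ K) := by
    rw [hL, show algebraMap D K s = algebraMap D K g * (algebraMap D K s / algebraMap D K g) from
      (mul_div_cancel₀ _ hgK).symm]
    refine FractionalIdeal.mul_mem_mul (FractionalIdeal.mem_coeIdeal_of_mem _ hg) ?_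
    rw [FractionalIdeal.mem_inv_iff hI0]
    intro y hy
    obtain ⟨z, hz, rfl⟩ := (FractionalIdeal.mem_coeIdeal _).mp hy
    obtain ⟨c, hc⟩ := H z hz
    rw [FractionalIdeal.mem_one_iff]
    refine ⟨c, ?_⟩
    rw [div_mul_eq_mul_div, eq_div_iff hgK, ← map_mul, ← map_mul, hc, mul_comm]
  obtain ⟨s', hs', he⟩ := (FractionalIdeal.mem_coeIdeal _).mp hmem
  rwa [← IsFractionRing.injective D K he]
end
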